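/- arXiv:1001.1032 — 3 statements merged into one kernel-verified Lean document; each statement's English description precedes it below -/
import Mathlib

section
/- Let Q be a real 3×3 symmetric traceless matrix and let ε > 0. Then tr(Q³) ≤ (3ε/8)·(tr(Q²))² + (1/ε)·tr(Q²). -/
/-- For a real 3×3 symmetric traceless matrix `Q` and every `ε > 0`,
`tr(Q³) ≤ (3ε/8)·(tr(Q²))² + (1/ε)·tr(Q²)`. -/
theorem trace_cube_le (Q : Matrix (Fin 3) (Fin 3) ℝ)
    (hsymm : Q.IsSymm) (htr : Q.trace = 0) (ε : ℝ) (hε : 0 < ε) :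
    (Q ^ 3).trace ≤ (3 * ε / 8) * ((Q ^ 2).trace) ^ 2 + (1 / ε) * (Q ^ 2).trace := by
  have h1 : Q 1 0 = Q 0 1 := hsymm.apply 0 1
  have h2 : Q 2 0 = Q 0 2 := hsymm.apply 0 2
  have h3 : Q 2 1 = Q 1 2 := hsymm.apply 1 2
  have h4 : Q 2 2 = - Q 0 0 - Q 1 1 := by
    simp only [Matrix.trace, Matrix.diag, Fin.sum_univ_three] at htr
    linarith
  simp only [pow_succ, pow_zero, one_mul, Matrix.trace, Matrix.diag, Matrix.mul_apply,
    Fin.sum_univ_three, h1, h2, h3, h4]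
  generalize Q 0 0 = a
  generalize Q 0 1 = b
  generalize Q 0 2 = c
  generalize Q 1 1 = d
  generalize Q 1 2 = e
  have key : 0 ≤ (1 / ε) * ((ε / 2 * (a*a+b*b+c*c) - a)^2 + (ε / 2 * (b*b+d*d+e*e) - d)^2
      + (ε / 2 * (c*c+e*e+(-a-d)*(-a-d)) - (-a-d))^2
      + 2 * (ε / 2 * (a*b+b*d+c*e) - b)^2 + 2 * (ε / 2 * (a*c+b*e+c*(-a-d)) - c)^2
      + 2 * (ε / 2 * (b*c+d*e+e*(-a-d)) - e)^2)
      + ε / 4 * (a^2+d^2+(-a-d)^2+2*b^2+2*c^2+2*e^2)^2 := by positivity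
  rw [← sub_nonneg]
  refine key.trans (le_of_eq ?_)
  field_simp
  ring
end

section
/- For all real numbers x, y and every ε > 0 one has −3xy(x+y) ≤ (3ε/2)·(x² + y² + xy)² + (2/ε)·(x² + y² + xy). -/
/-- For all real `x, y` and every `ε > 0`,
`−3xy(x+y) ≤ (3ε/2)(x² + y² + xy)² + (2/ε)(x² + y² + xy)`. -/
theorem scalar_cubic_ineq (x y ε : ℝ) (hε : 0 < ε) :
    -3 * x * y * (x + y) ≤ (3 * ε / 2) * (x ^ 2 + y ^ 2 + x * y) ^ 2
      + (2 / ε) * (x ^ 2 + y ^ 2 + x * y) := by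
  have h1 : (x * y) ^ 2 ≤ (x ^ 2 + y ^ 2 + x * y) ^ 2 := by
    nlinarith [mul_nonneg (add_nonneg (sq_nonneg x) (sq_nonneg y)) (sq_nonneg (x + y))]
  have h2 : 3 / 2 * (x + y) ^ 2 ≤ 2 * (x ^ 2 + y ^ 2 + x * y) := by
    nlinarith [sq_nonneg (x - y)]
  have h3 : (3 * ε / 2) * (x * y) ^ 2 ≤ (3 * ε / 2) * (x ^ 2 + y ^ 2 + x * y) ^ 2 :=
    mul_le_mul_of_nonneg_left h1 (by positivity)
  have h4 : (1 / ε) * (3 / 2 * (x + y) ^ 2) ≤ (1 / ε) * (2 * (x ^ 2 + y ^ 2 + x * y)) :=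
    mul_le_mul_of_nonneg_left h2 (by positivity)
  have h5 : 0 ≤ 3 / (2 * ε) * (ε * (x * y) + (x + y)) ^ 2 := by positivity
  have h6 : 3 / (2 * ε) * (ε * (x * y) + (x + y)) ^ 2
      = (3 * ε / 2) * (x * y) ^ 2 + (1 / ε) * (3 / 2 * (x + y) ^ 2) + 3 * x * y * (x + y) := by
    field_simp
    ring
  have h7 : (1 / ε) * (2 * (x ^ 2 + y ^ 2 + x * y)) = (2 / ε) * (x ^ 2 + y ^ 2 + x * y) := by
    ring
  linarith
end

section
/- Let d ≥ 1. Let Q', Q : ℝ^d → M_d(ℝ) be smooth compactly supported fields of symmetric matrices and let u : ℝ^d → ℝ^d be a smooth compactly supported vector field. Define Ω_{αβ}(x) = (1/2)(∂_β u_α(x) − ∂_α u_β(x)) and let ΔQ denote the componentwise Laplacian of Q. Then ∫_{ℝ^d} tr( (Ω(x)Q'(x) − Q'(x)Ω(x)) · ΔQ(x) ) dx − ∫_{ℝ^d} Σ_{α,β,γ} ∂_β( Q'_{αγ}(x) ΔQ_{γβ}(x) − ΔQ_{αγ}(x) Q'_{γβ}(x) ) u_α(x) dx = 0. -/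
open MeasureTheory

/-- partial derivative in the `γ`-th coordinate direction on `ℝ^d`. -/
noncomputable def pd {d : ℕ} (γ : Fin d) (f : (Fin d → ℝ) → ℝ) (x : Fin d → ℝ) : ℝ :=
  fderiv ℝ f x (Pi.single γ 1)

/-- componentwise Laplacian on `ℝ^d`. -/
noncomputable def lap {d : ℕ} (f : (Fin d → ℝ) → ℝ) (x : Fin d → ℝ) : ℝ :=
  ∑ γ, pd γ (pd γ f) x

/-- vorticity tensor `Ω_{αβ} = (1/2)(∂_β u_α − ∂_α u_β)`. -/
noncomputable def vort {d : ℕ} (u : (Fin d → ℝ) → Fin d → ℝ) (x : Fin d → ℝ)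
    (α β : Fin d) : ℝ :=
  (1 / 2) * (pd β (fun y => u y α) x - pd α (fun y => u y β) x)

lemma pd_smooth {d : ℕ} (γ : Fin d) {f : (Fin d → ℝ) → ℝ} (hf : ContDiff ℝ (⊤ : ℕ∞) f) :
    ContDiff ℝ (⊤ : ℕ∞) (pd γ f) := by
  have h : ContDiff ℝ (⊤ : ℕ∞) (fderiv ℝ f) := hf.fderiv_right (by simp)
  exact h.clm_apply contDiff_const

lemma lap_smooth {d : ℕ} {f : (Fin d → ℝ) → ℝ} (hf : ContDiff ℝ (⊤ : ℕ∞) f) :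
    ContDiff ℝ (⊤ : ℕ∞) (lap f) := by
  unfold lap
  exact ContDiff.sum fun γ _ => pd_smooth γ (pd_smooth γ hf)

lemma pd_supp {d : ℕ} (γ : Fin d) {f : (Fin d → ℝ) → ℝ} (hf : HasCompactSupport f) :
    HasCompactSupport (pd γ f) :=
  hf.fderiv_apply (𝕜 := ℝ) (Pi.single γ 1)

lemma ibp {d : ℕ} (β : Fin d) {f g : (Fin d → ℝ) → ℝ} (hf : ContDiff ℝ (⊤ : ℕ∞) f)
    (hg : ContDiff ℝ (⊤ : ℕ∞) g) (hgs : HasCompactSupport g) :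
    Integrable (fun x => pd β f x * g x) ∧ Integrable (fun x => f x * pd β g x) ∧
    ∫ x, pd β f x * g x = - ∫ x, f x * pd β g x := by
  have i1 : Integrable (fun x => pd β f x * g x) :=
    ((pd_smooth β hf).continuous.mul hg.continuous).integrable_of_hasCompactSupport hgs.mul_left
  have i2 : Integrable (fun x => f x * pd β g x) :=
    (hf.continuous.mul (pd_smooth β hg).continuous).integrable_of_hasCompactSupport
      (pd_supp β hgs).mul_left
  have i3 : Integrable (fun x => f x * g x) :=
    (hf.continuous.mul hg.continuous).integrable_of_hasCompactSupport hgs.mul_left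
  refine ⟨i1, i2, ?_⟩
  have := integral_mul_fderiv_eq_neg_fderiv_mul_of_integrable (𝕜 := ℝ) (μ := volume)
    (v := Pi.single β 1) i1 i2 i3
    (fun x _ => hf.differentiable (by simp) x) (fun x _ => hg.differentiable (by simp) x)
  unfold pd
  rw [this, neg_neg]

lemma alg {d : ℕ} (P L D : Matrix (Fin d) (Fin d) ℝ) (hP : P.transpose = P)
    (hL : L.transpose = L) :
    (∑ α, ∑ β, (∑ γ, ((1 / 2) * (D α γ - D γ α) * P γ β - P α γ * ((1 / 2) * (D γ β - D β γ))))
      * L β α) = - ∑ α, ∑ β, ∑ γ, (P α γ * L γ β - L α γ * P γ β) * D α β := by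
  have e1 : (∑ α, ∑ β, (∑ γ, ((1 / 2) * (D α γ - D γ α) * P γ β
      - P α γ * ((1 / 2) * (D γ β - D β γ)))) * L β α)
      = ((((1 / 2 : ℝ) • (D - D.transpose)) * P - P * ((1 / 2 : ℝ) • (D - D.transpose)))
        * L).trace := by
    simp [Matrix.trace, Matrix.mul_apply, Finset.sum_sub_distrib, Finset.mul_sum, mul_assoc,
      mul_left_comm]
  have e2 : (∑ α, ∑ β, ∑ γ, (P α γ * L γ β - L α γ * P γ β) * D α β)
      = ((P * L - L * P) * D.transpose).trace := by
    simp [Matrix.trace, Matrix.mul_apply, Finset.sum_sub_distrib, Finset.sum_mul, sub_mul]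
  have a1 : (D.transpose * P * L).trace = (D * L * P).trace := by
    rw [← Matrix.trace_transpose]
    simp only [Matrix.transpose_mul, Matrix.transpose_transpose, hP, hL]
    rw [← Matrix.mul_assoc, Matrix.trace_mul_comm, ← Matrix.mul_assoc]
  have a2 : (D.transpose * L * P).trace = (D * P * L).trace := by
    rw [← Matrix.trace_transpose]
    simp only [Matrix.transpose_mul, Matrix.transpose_transpose, hP, hL]
    rw [← Matrix.mul_assoc, Matrix.trace_mul_comm, ← Matrix.mul_assoc]
  have b (X : Matrix (Fin d) (Fin d) ℝ) : (P * X * L).trace = (X * L * P).trace := by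
    rw [Matrix.mul_assoc, Matrix.trace_mul_comm]
  have c (X : Matrix (Fin d) (Fin d) ℝ) : (P * L * X).trace = (X * P * L).trace := by
    rw [Matrix.trace_mul_comm, Matrix.mul_assoc]
  have c' (X : Matrix (Fin d) (Fin d) ℝ) : (L * P * X).trace = (X * L * P).trace := by
    rw [Matrix.trace_mul_comm, Matrix.mul_assoc]
  rw [e1, e2]
  simp only [sub_mul, mul_sub, smul_mul_assoc, mul_smul_comm, Matrix.trace_sub,
    Matrix.trace_smul, smul_sub, b, c, c', a1, a2, smul_eq_mul]
  ring

/-- For smooth compactly supported symmetric matrix fields `Q', Q` on `ℝ^d` and a smooth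
compactly supported vector field `u`, with `Ω` the vorticity of `u`,
`∫ tr((ΩQ' − Q'Ω)ΔQ) dx − ∫ Σ_{α,β,γ} ∂_β(Q'_{αγ}ΔQ_{γβ} − ΔQ_{αγ}Q'_{γβ}) u_α dx = 0`. -/
theorem corotation_stress_cancellation (d : ℕ) (hd : 1 ≤ d)
    (Q' Q : (Fin d → ℝ) → Fin d → Fin d → ℝ) (u : (Fin d → ℝ) → Fin d → ℝ)
    (hQ'sm : ContDiff ℝ (⊤ : ℕ∞) Q') (hQsm : ContDiff ℝ (⊤ : ℕ∞) Q)
    (husm : ContDiff ℝ (⊤ : ℕ∞) u)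
    (hQ'supp : HasCompactSupport Q') (hQsupp : HasCompactSupport Q)
    (husupp : HasCompactSupport u)
    (hQ'symm : ∀ x α β, Q' x α β = Q' x β α) (hQsymm : ∀ x α β, Q x α β = Q x β α) :
    (∫ x : Fin d → ℝ, ∑ α, ∑ β,
        (∑ γ, (vort u x α γ * Q' x γ β - Q' x α γ * vort u x γ β))
          * lap (fun y => Q y β α) x)
    - (∫ x : Fin d → ℝ, ∑ α, ∑ β, ∑ γ,
        pd β (fun y => Q' y α γ * lap (fun z => Q z γ β) y
          - lap (fun z => Q z α γ) y * Q' y γ β) x * u x α) = 0 := by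
  have hP : ∀ α β, ContDiff ℝ (⊤ : ℕ∞) (fun y => Q' y α β) := fun α β =>
    contDiff_pi.1 (contDiff_pi.1 hQ'sm α) β
  have hL : ∀ α β, ContDiff ℝ (⊤ : ℕ∞) (lap (fun y => Q y α β)) := fun α β =>
    lap_smooth (contDiff_pi.1 (contDiff_pi.1 hQsm α) β)
  have hu : ∀ α, ContDiff ℝ (⊤ : ℕ∞) (fun y => u y α) := contDiff_pi.1 husm
  have hus : ∀ α, HasCompactSupport (fun y => u y α) := fun α =>
    husupp.comp_left (g := fun v : Fin d → ℝ => v α) rfl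
  have key := fun α β γ => ibp β
    (((hP α γ).mul (hL γ β)).sub ((hL α γ).mul (hP γ β))) (hu α) (hus α)
  have h2 : (∫ x : Fin d → ℝ, ∑ α, ∑ β, ∑ γ,
        pd β (fun y => Q' y α γ * lap (fun z => Q z γ β) y
          - lap (fun z => Q z α γ) y * Q' y γ β) x * u x α)
      = ∫ x : Fin d → ℝ, - ∑ α, ∑ β, ∑ γ, (Q' x α γ * lap (fun z => Q z γ β) x
          - lap (fun z => Q z α γ) x * Q' x γ β) * pd β (fun y => u y α) x := by
    rw [integral_neg]
    rw [integral_finsetSum _ fun α _ => integrable_finsetSum _ fun β _ =>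
      integrable_finsetSum _ fun γ _ => (key α β γ).1]
    rw [integral_finsetSum _ fun α _ => integrable_finsetSum _ fun β _ =>
      integrable_finsetSum _ fun γ _ => (key α β γ).2.1]
    rw [← Finset.sum_neg_distrib]
    refine Finset.sum_congr rfl fun α _ => ?_
    rw [integral_finsetSum _ fun β _ =>
      integrable_finsetSum _ fun γ _ => (key α β γ).1]
    rw [integral_finsetSum _ fun β _ =>
      integrable_finsetSum _ fun γ _ => (key α β γ).2.1]
    rw [← Finset.sum_neg_distrib]
    refine Finset.sum_congr rfl fun β _ => ?_
    rw [integral_finsetSum _ fun γ _ => (key α β γ).1]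
    rw [integral_finsetSum _ fun γ _ => (key α β γ).2.1]
    rw [← Finset.sum_neg_distrib]
    exact Finset.sum_congr rfl fun γ _ => (key α β γ).2.2
  rw [h2, sub_eq_zero]
  congr 1
  funext x
  exact alg (Q' x) (fun α β => lap (fun z => Q z α β) x) (fun α β => pd β (fun y => u y α) x)
    (by ext α β; exact hQ'symm x β α)
    (by
      ext α β
      change lap (fun z => Q z β α) x = lap (fun z => Q z α β) x
      simp only [hQsymm _ β α])
end
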